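/- Under assumption (H), one has the inequality (min_{t∈[0,T]} |B(t)|)² > 2·(max_{t∈[0,T]} |A(t)|)·(max_{t∈[0,T]} |C(t)|). -/

import Mathlib

/-!
Let `m` be the minimum of `A'` over a period; `m ≤ 0`, since `A'` vanishes somewhere by Rolle's
theorem. Any value `A s` is taken again at some `s' ∈ [t, t + T)`, so the mean value inequality on
`[t, s']` gives `A t - A s ≤ -m (s' - t) ≤ -m T`. Exchanging `s` and `t` bounds the oscillation of
`A` by `-m T`, and the zero of `A` turns this into `max |A| ≤ -m T`. Hence
`2 max |A| max |C| ≤ -2 m T max |C| ≤ -4 m (1 + T max |C|)`.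
-/

open Set Filter Topology

theorem periodic_deriv {𝕜 F : Type*} [NontriviallyNormedField 𝕜] [NormedAddCommGroup F]
    [NormedSpace 𝕜 F] {f : 𝕜 → F} {c : 𝕜} (hf : Function.Periodic f c) :
    Function.Periodic (deriv f) c := fun x => by
  rw [← deriv_comp_add_const, hf.funext]

theorem sInf_image_Icc_le_of_periodic {α β : Type*} [AddCommGroup α] [LinearOrder α]
    [IsOrderedAddMonoid α] [Archimedean α] [ConditionallyCompleteLattice β] {f : α → β} {c : α}
    (hf : Function.Periodic f c) (hc : 0 < c) (a : α) (hbdd : BddBelow (f '' Icc a (a + c)))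
    (x : α) : sInf (f '' Icc a (a + c)) ≤ f x :=
  csInf_le hbdd (hf.image_Icc hc a ▸ mem_range_self x)

section PeriodicReal

variable {f : ℝ → ℝ} {T m : ℝ}

theorem exists_deriv_eq_zero_of_periodic (hf : Continuous f) (hper : Function.Periodic f T)
    (hT : 0 < T) : ∃ t, deriv f t = 0 :=
  let ⟨t, _, ht⟩ := exists_deriv_eq_zero hT hf.continuousOn hper.eq.symm
  ⟨t, ht⟩

theorem nonpos_of_periodic_of_le_deriv (hf : Continuous f) (hper : Function.Periodic f T)
    (hT : 0 < T) (hm : ∀ t, m ≤ deriv f t) : m ≤ 0 :=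
  let ⟨t, ht⟩ := exists_deriv_eq_zero_of_periodic hf hper hT
  ht ▸ hm t

theorem abs_sub_le_of_periodic_of_le_deriv (hf : Differentiable ℝ f)
    (hper : Function.Periodic f T) (hT : 0 < T) (hm : ∀ t, m ≤ deriv f t) (s t : ℝ) :
    |f s - f t| ≤ -m * T := by
  have hm0 : 0 ≤ -m := neg_nonneg.mpr (nonpos_of_periodic_of_le_deriv hf.continuous hper hT hm)
  have sub_le (x y : ℝ) : f x - f y ≤ -m * T := by
    obtain ⟨y', ⟨hxy', hy'x⟩, hy'⟩ := hper.exists_mem_Ico hT y x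
    calc f x - f y = -(f y' - f x) := by rw [hy', neg_sub]
      _ ≤ -(m * (y' - x)) := neg_le_neg (mul_sub_le_image_sub_of_le_deriv hf hm hxy')
      _ = -m * (y' - x) := (neg_mul _ _).symm
      _ ≤ -m * T := mul_le_mul_of_nonneg_left (sub_le_iff_le_add'.mpr hy'x.le) hm0
  exact abs_sub_le_iff.mpr ⟨sub_le s t, sub_le t s⟩

theorem sInf_image_deriv_le_of_periodic (hper : Function.Periodic f T) (hT : 0 < T)
    (hbdd : BddBelow (deriv f '' Icc 0 T)) (t : ℝ) : sInf (deriv f '' Icc 0 T) ≤ deriv f t := by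
  simpa only [zero_add] using
    sInf_image_Icc_le_of_periodic (periodic_deriv hper) hT 0 (by rwa [zero_add]) t

theorem sSup_image_abs_le_of_periodic (hf : Differentiable ℝ f) (hper : Function.Periodic f T)
    (hT : 0 < T) (hbdd : BddBelow (deriv f '' Icc 0 T)) (hzero : ∃ t, f t = 0) :
    sSup ((fun t => |f t|) '' Icc 0 T) ≤ -sInf (deriv f '' Icc 0 T) * T := by
  obtain ⟨t₀, ht₀⟩ := hzero
  refine csSup_le ((nonempty_Icc.mpr hT.le).image _) (forall_mem_image.mpr fun t _ => ?_)
  simpa only [ht₀, sub_zero] using abs_sub_le_of_periodic_of_le_deriv hf hper hT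
    (sInf_image_deriv_le_of_periodic hper hT hbdd) t t₀

end PeriodicReal

theorem min_B_sq_gt_two_maxA_maxC_general {T : ℝ} (hT : 0 < T) {A B C : ℝ → ℝ}
    (hA : Differentiable ℝ A) (hAper : Function.Periodic A T)
    (hA' : BddBelow (deriv A '' Icc 0 T)) (hzero : ∃ t, A t = 0)
    (hC : BddAbove ((fun t => |C t|) '' Icc 0 T))
    (hcond : 2 * (-sInf (deriv A '' Icc 0 T) * T) * sSup ((fun t => |C t|) '' Icc 0 T) <
      sInf ((fun t => |B t|) '' Icc 0 T) ^ 2) :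
    2 * sSup ((fun t => |A t|) '' Icc 0 T) * sSup ((fun t => |C t|) '' Icc 0 T) <
      sInf ((fun t => |B t|) '' Icc 0 T) ^ 2 := by
  have hC0 : 0 ≤ sSup ((fun t => |C t|) '' Icc 0 T) :=
    (abs_nonneg (C 0)).trans (le_csSup hC (mem_image_of_mem _ (left_mem_Icc.mpr hT.le)))
  refine lt_of_le_of_lt ?_ hcond
  gcongr
  exact sSup_image_abs_le_of_periodic hA hAper hT hA' hzero

/-- under assumption (H),
(min |B|)² > 2·(max |A|)·(max |C|). -/
theorem min_B_sq_gt_two_maxA_maxC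
    (T : ℝ) (hT : 0 < T) (A B C : ℝ → ℝ)
    (hA : ContDiff ℝ 1 A) (hB : ContDiff ℝ 1 B) (hC : ContDiff ℝ 1 C)
    (hAper : Function.Periodic A T) (hBper : Function.Periodic B T)
    (hCper : Function.Periodic C T)
    (hzero : ∃ t ∈ Icc (0 : ℝ) T, A t = 0)
    (hcond : (sInf ((fun t => |B t|) '' Icc (0 : ℝ) T)) ^ 2 >
      -4 * sInf ((fun t => deriv A t) '' Icc (0 : ℝ) T) *
        (1 + T * sSup ((fun t => |C t|) '' Icc (0 : ℝ) T))) :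
    (sInf ((fun t => |B t|) '' Icc (0 : ℝ) T)) ^ 2 >
      2 * sSup ((fun t => |A t|) '' Icc (0 : ℝ) T) *
        sSup ((fun t => |C t|) '' Icc (0 : ℝ) T) := by
  have hAdiff : Differentiable ℝ A := hA.differentiable one_ne_zero
  have hA' : BddBelow (deriv A '' Icc 0 T) :=
    (isCompact_Icc.image (hA.continuous_deriv le_rfl)).bddBelow
  have hm : sInf (deriv A '' Icc 0 T) ≤ 0 :=
    nonpos_of_periodic_of_le_deriv hA.continuous hAper hT
      (sInf_image_deriv_le_of_periodic hAper hT hA')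
  have hTC : 0 ≤ T * sSup ((fun t => |C t|) '' Icc 0 T) :=
    mul_nonneg hT.le (Real.sSup_nonneg (forall_mem_image.mpr fun _ _ => abs_nonneg _))
  refine min_B_sq_gt_two_maxA_maxC_general hT hAdiff hAper hA' (hzero.imp fun _ h => h.2)
    (isCompact_Icc.image hC.continuous.abs).bddAbove (lt_of_le_of_lt ?_ hcond)
  linarith [mul_nonneg (neg_nonneg.mpr hm) hTC]
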